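/- arXiv:math/0509602 — 5 statements merged into one kernel-verified Lean document; each statement's English description precedes it below -/
import Mathlib

section
/- Let f be a continuous complex-valued function on the unit circle T = {z ∈ ℂ : |z| = 1}, and for |z| < 1 define h(z) = ∫₀^{2π} f(e^{it}) P(z, e^{it}) dt, where P(z, w) = (1/(2π)) · (1 − |z|²)/|z − w|² is the Poisson kernel of the unit disk. Then for every ζ ∈ ℂ with |ζ| = 1, h(z) → f(ζ) as z → ζ with |z| < 1; consequently the function equal to h on the open unit disk and to f on the unit circle is continuous on the closed unit disk {z ∈ ℂ : |z| ≤ 1}. -/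
open Filter MeasureTheory Set

/-- The Poisson kernel of the unit disk. -/
noncomputable def poissonKernelDisk (z w : ℂ) : ℝ :=
  (1 / (2 * Real.pi)) * ((1 - ‖z‖ ^ 2) / ‖z - w‖ ^ 2)

lemma pk_circ (t : ℝ) : ‖Complex.exp (t * Complex.I)‖ = 1 := Complex.norm_exp_ofReal_mul_I t

lemma pk_cont : Continuous (fun p : {z : ℂ // ‖z‖ < 1} × ℝ =>
    poissonKernelDisk p.1.1 (Complex.exp (p.2 * Complex.I))) := by
  unfold poissonKernelDisk
  refine continuous_const.mul (Continuous.div (by fun_prop) (by fun_prop) ?_)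
  rintro ⟨⟨z, hz⟩, t⟩ h0
  have h1 : z - Complex.exp (t * Complex.I) = 0 := by simpa using h0
  have := pk_circ t
  rw [← sub_eq_zero.1 h1] at this
  linarith

lemma pk_cont' (z : ℂ) (hz : ‖z‖ < 1) : Continuous (fun t : ℝ =>
    poissonKernelDisk z (Complex.exp (t * Complex.I))) :=
  pk_cont.comp (f := fun t : ℝ => ((⟨z, hz⟩ : {z : ℂ // ‖z‖ < 1}), t)) (by fun_prop)

lemma pk_nonneg (z w : ℂ) (hz : ‖z‖ < 1) : 0 ≤ poissonKernelDisk z w := by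
  unfold poissonKernelDisk
  have : 0 ≤ 1 - ‖z‖ ^ 2 := by nlinarith [norm_nonneg z]
  positivity

lemma pk_int (z : ℂ) (hz : ‖z‖ < 1) :
    ∫ t in (0:ℝ)..(2 * Real.pi), poissonKernelDisk z (Complex.exp (t * Complex.I)) = 1 := by
  have h := DiffContOnCl.circleAverage_poissonKernel_smul' (f := fun _ => (1:ℂ)) (R := 1) (c := 0)
    (w := z) diffContOnCl_const (by simpa using hz)
  rw [Real.circleAverage_def, ← intervalIntegral.integral_smul] at h
  have h2 : ((∫ t in (0:ℝ)..(2 * Real.pi),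
      poissonKernelDisk z (Complex.exp (t * Complex.I)) : ℝ) : ℂ) = 1 := by
    rw [← h, ← intervalIntegral.integral_ofReal]
    congr 1
    ext t
    simp [poissonKernelDisk, circleMap, norm_sub_rev z]
  exact_mod_cast h2

lemma pk_F_cont (f : ℂ → ℂ) (hf : ContinuousOn f {z : ℂ | ‖z‖ = 1}) :
    Continuous (fun t : ℝ => f (Complex.exp (t * Complex.I))) :=
  hf.comp_continuous (by fun_prop) (fun t => pk_circ t)

lemma pk_tendsto (f : ℂ → ℂ)
    (hf : ContinuousOn f {z : ℂ | ‖z‖ = 1})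
    (h : ℂ → ℂ)
    (hh : ∀ z : ℂ, ‖z‖ < 1 →
      h z = ∫ t in (0:ℝ)..(2 * Real.pi),
        f (Complex.exp (t * Complex.I)) *
          (poissonKernelDisk z (Complex.exp (t * Complex.I)) : ℂ)) 
    (ζ : ℂ) (hζ : ‖ζ‖ = 1) :
      Tendsto h (nhdsWithin ζ {z : ℂ | ‖z‖ < 1}) (nhds (f ζ)) := by
  have hF := pk_F_cont f hf
  have hcomp : IsCompact {z : ℂ | ‖z‖ = 1} := by
    have : {z : ℂ | ‖z‖ = 1} = Metric.sphere 0 1 := by ext; simp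
    rw [this]; exact isCompact_sphere 0 1
  obtain ⟨M, hM⟩ := hcomp.exists_bound_of_continuousOn hf
  have hM0 : 0 ≤ M := (norm_nonneg _).trans (hM ζ hζ)
  rw [Metric.tendsto_nhds]
  intro ε hε
  obtain ⟨δ, hδ, hfδ⟩ := Metric.continuousOn_iff.1 hf ζ hζ (ε / 2) (by positivity)
  have hev1 : ∀ᶠ z in nhdsWithin ζ {z : ℂ | ‖z‖ < 1}, dist z ζ < δ / 2 :=
    nhdsWithin_le_nhds (Metric.ball_mem_nhds ζ (by positivity))
  have hev2 : ∀ᶠ z in nhdsWithin ζ {z : ℂ | ‖z‖ < 1},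
      2 * M * (1 - ‖z‖ ^ 2) / (δ / 2) ^ 2 < ε / 2 := by
    have hc : Continuous (fun z : ℂ => 2 * M * (1 - ‖z‖ ^ 2) / (δ / 2) ^ 2) := by fun_prop
    apply nhdsWithin_le_nhds
    refine hc.continuousAt.eventually_lt continuousAt_const ?_
    rw [hζ]; simpa using hε
  filter_upwards [hev1, hev2, self_mem_nhdsWithin] with z h1 h2 (hz : ‖z‖ < 1)
  have hK := pk_cont' z hz
  have hpi := Real.pi_pos
  have hz2 : 0 ≤ 1 - ‖z‖ ^ 2 := by nlinarith [norm_nonneg z]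
  have e1 : h z - f ζ = ∫ t in (0:ℝ)..(2 * Real.pi),
      (f (Complex.exp (t * Complex.I)) - f ζ) *
          (poissonKernelDisk z (Complex.exp (t * Complex.I)) : ℂ) := by
    have : f ζ = ∫ t in (0:ℝ)..(2 * Real.pi),
        f ζ * (poissonKernelDisk z (Complex.exp (t * Complex.I)) : ℂ) := by
      rw [intervalIntegral.integral_const_mul, intervalIntegral.integral_ofReal, pk_int z hz]
      simp
    conv_lhs => rw [hh z hz, this]
    rw [← intervalIntegral.integral_sub]
    · simp only [sub_mul]
    · exact (hF.mul (Complex.continuous_ofReal.comp hK)).intervalIntegrable _ _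
    · exact Continuous.intervalIntegrable (by fun_prop) _ _
  rw [dist_eq_norm, e1]
  have e2 : ‖∫ t in (0:ℝ)..(2 * Real.pi),
      (f (Complex.exp (t * Complex.I)) - f ζ) *
          (poissonKernelDisk z (Complex.exp (t * Complex.I)) : ℂ)‖ ≤
      ∫ t in (0:ℝ)..(2 * Real.pi),
       (ε / 2 * poissonKernelDisk z (Complex.exp (t * Complex.I)) +
         (1 / (2 * Real.pi)) * (2 * M * (1 - ‖z‖ ^ 2) / (δ / 2) ^ 2)) := by
    refine intervalIntegral.norm_integral_le_of_norm_le (by positivity) ?_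
      (Continuous.intervalIntegrable (by fun_prop) _ _)
    refine Eventually.of_forall fun t _ => ?_
    have hKn := pk_nonneg z (Complex.exp (t * Complex.I)) hz
    rw [norm_mul, Complex.norm_real, Real.norm_of_nonneg hKn]
    by_cases hd : dist (Complex.exp (t * Complex.I)) ζ < δ
    · have := hfδ _ (pk_circ t) hd
      rw [dist_eq_norm] at this
      have h3 : 0 ≤ (1 / (2 * Real.pi)) * (2 * M * (1 - ‖z‖ ^ 2) / (δ / 2) ^ 2) := by positivity
      nlinarith
    · have h3 : ‖f (Complex.exp (t * Complex.I)) - f ζ‖ ≤ 2 * M := by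
        have := norm_sub_le (f (Complex.exp (t * Complex.I))) (f ζ)
        have := hM _ (pk_circ t)
        have := hM ζ hζ
        linarith
      have h4 : δ / 2 ≤ ‖z - Complex.exp (t * Complex.I)‖ := by
        have := dist_triangle_left (Complex.exp (t * Complex.I)) ζ z
        rw [← dist_eq_norm]
        linarith
      have h5 : poissonKernelDisk z (Complex.exp (t * Complex.I)) ≤
          (1 / (2 * Real.pi)) * ((1 - ‖z‖ ^ 2) / (δ / 2) ^ 2) := by
        unfold poissonKernelDisk
        gcongr
      calc _ ≤ (2 * M) * ((1 / (2 * Real.pi)) * ((1 - ‖z‖ ^ 2) / (δ / 2) ^ 2)) := by gcongr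
        _ = (1 / (2 * Real.pi)) * (2 * M * (1 - ‖z‖ ^ 2) / (δ / 2) ^ 2) := by ring
        _ ≤ _ := by
          have : 0 ≤ ε / 2 * poissonKernelDisk z (Complex.exp (t * Complex.I)) := by positivity
          linarith
  refine e2.trans_lt ?_
  rw [intervalIntegral.integral_add (Continuous.intervalIntegrable (by fun_prop) _ _)
    (Continuous.intervalIntegrable (by fun_prop) _ _), intervalIntegral.integral_const_mul,
    pk_int z hz, intervalIntegral.integral_const, smul_eq_mul, sub_zero, ← mul_assoc,
    mul_one_div_cancel (by positivity)]
  linarith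

theorem poisson_integral_boundary_values (f : ℂ → ℂ)
    (hf : ContinuousOn f {z : ℂ | ‖z‖ = 1})
    (h : ℂ → ℂ)
    (hh : ∀ z : ℂ, ‖z‖ < 1 →
      h z = ∫ t in (0:ℝ)..(2 * Real.pi),
        f (Complex.exp (t * Complex.I)) *
          (poissonKernelDisk z (Complex.exp (t * Complex.I)) : ℂ)) :
    (∀ ζ : ℂ, ‖ζ‖ = 1 →
      Tendsto h (nhdsWithin ζ {z : ℂ | ‖z‖ < 1}) (nhds (f ζ))) ∧
    ContinuousOn (fun z : ℂ => if ‖z‖ < 1 then h z else f z)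
      {z : ℂ | ‖z‖ ≤ 1} := by
  have T := pk_tendsto f hf h hh
  refine ⟨T, ?_⟩
  have hF := pk_F_cont f hf
  have hopen : IsOpen {z : ℂ | ‖z‖ < 1} := isOpen_lt continuous_norm continuous_const
  have hc : ContinuousOn h {z : ℂ | ‖z‖ < 1} := by
    rw [continuousOn_iff_continuous_domRestrict]
    have : ({z : ℂ | ‖z‖ < 1}.domRestrict h) = fun z : {z : ℂ // ‖z‖ < 1} =>
      ∫ t in (0:ℝ)..(2 * Real.pi),
        f (Complex.exp (t * Complex.I)) *
          (poissonKernelDisk z (Complex.exp (t * Complex.I)) : ℂ) := by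
      ext z
      exact hh z.1 z.2
    rw [this]
    apply intervalIntegral.continuous_parametric_intervalIntegral_of_continuous'
    exact (hF.comp continuous_snd).mul (Complex.continuous_ofReal.comp pk_cont)
  intro ζ (hζ : ‖ζ‖ ≤ 1)
  rcases hζ.lt_or_eq with hlt | heq
  · apply ContinuousAt.continuousWithinAt
    refine (hc.continuousAt (hopen.mem_nhds hlt)).congr ?_
    filter_upwards [hopen.mem_nhds hlt] with z hz
    exact (if_pos hz).symm
  · have hU : {z : ℂ | ‖z‖ ≤ 1} = {z : ℂ | ‖z‖ < 1} ∪ {z : ℂ | ‖z‖ = 1} := by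
      ext z; simp [le_iff_lt_or_eq]
    rw [hU, ContinuousWithinAt, nhdsWithin_union]
    simp only [heq, lt_irrefl, if_false]
    refine Tendsto.sup ?_ ?_
    · refine (T ζ heq).congr' ?_
      filter_upwards [self_mem_nhdsWithin] with z hz
      exact (if_pos hz).symm
    · refine Tendsto.congr' ?_ (hf ζ heq)
      filter_upwards [self_mem_nhdsWithin] with z (hz : ‖z‖ = 1)
      simp [hz]
end

section
/- Let f : ℝ → ℂ be a continuous integrable function with Fourier transform f̂(ξ) = ∫_ℝ f(x) exp(−iξx) dx. Then for every x ∈ ℝ, the Abel means of the inverse Fourier integral converge to f(x): (1/(2π)) ∫_ℝ f̂(ξ) exp(−η|ξ|) exp(iξx) dξ → f(x) as η → 0⁺. -/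
open Filter MeasureTheory Set

theorem aux_eq_Ioi (η t : ℝ) (ξ : ℝ) (h : ξ ∈ Ioi (0:ℝ)) :
    (Real.exp (-η * |ξ|) : ℂ) * Complex.exp ((ξ : ℂ) * t * Complex.I)
      = Complex.exp ((-η + t * Complex.I) * ξ) := by
  rw [abs_of_pos h, Complex.ofReal_exp, ← Complex.exp_add]
  congr 1
  push_cast
  ring

theorem aux_eq_Iic (η t : ℝ) (ξ : ℝ) (h : ξ ∈ Iic (0:ℝ)) :
    (Real.exp (-η * |ξ|) : ℂ) * Complex.exp ((ξ : ℂ) * t * Complex.I)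
      = Complex.exp ((η + t * Complex.I) * ξ) := by
  rw [abs_of_nonpos h, Complex.ofReal_exp, ← Complex.exp_add]
  congr 1
  push_cast
  ring

theorem aux_int (η : ℝ) (hη : 0 < η) (t : ℝ) :
    IntegrableOn (fun ξ : ℝ => (Real.exp (-η * |ξ|) : ℂ) * Complex.exp ((ξ : ℂ) * t * Complex.I))
      (Iic 0) ∧
    IntegrableOn (fun ξ : ℝ => (Real.exp (-η * |ξ|) : ℂ) * Complex.exp ((ξ : ℂ) * t * Complex.I))
      (Ioi 0) := by
  constructor
  · refine (integrableOn_congr_fun (aux_eq_Iic η t) measurableSet_Iic).2 ?_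
    exact integrableOn_exp_mul_complex_Iic (by simpa using hη) 0
  · refine (integrableOn_congr_fun (aux_eq_Ioi η t) measurableSet_Ioi).2 ?_
    exact integrableOn_exp_mul_complex_Ioi (by simpa using hη) 0

theorem aux_kernel (η : ℝ) (hη : 0 < η) (t : ℝ) :
    ∫ ξ : ℝ, (Real.exp (-η * |ξ|) : ℂ) * Complex.exp ((ξ : ℂ) * t * Complex.I)
      = ((2 * η / (η ^ 2 + t ^ 2) : ℝ) : ℂ) := by
  rw [← intervalIntegral.integral_Iic_add_Ioi (aux_int η hη t).1 (aux_int η hη t).2,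
    setIntegral_congr_fun measurableSet_Iic (aux_eq_Iic η t),
    setIntegral_congr_fun measurableSet_Ioi (aux_eq_Ioi η t),
    integral_exp_mul_complex_Iic (by simpa using hη),
    integral_exp_mul_complex_Ioi (by simpa using hη)]
  have h1 : (η + t * Complex.I : ℂ) ≠ 0 := fun h => by
    have := congrArg Complex.re h
    simp at this; exact hη.ne' this
  have h2 : (-η + t * Complex.I : ℂ) ≠ 0 := fun h => by
    have := congrArg Complex.re h
    simp at this; exact hη.ne' this
  have h3 : ((η ^ 2 + t ^ 2 : ℝ) : ℂ) ≠ 0 := by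
    exact_mod_cast (by positivity : (η ^ 2 + t ^ 2 : ℝ) ≠ 0)
  push_cast at h3 ⊢
  simp only [mul_zero, Complex.exp_zero]
  field_simp
  linear_combination (-2 * η * t ^ 2 : ℂ) * Complex.I_sq

theorem aux_fubini (f : ℝ → ℂ) (hfi : Integrable f) (x η : ℝ) (hη : 0 < η) :
    ∫ ξ : ℝ, (∫ y : ℝ, f y * Complex.exp (-(ξ : ℂ) * y * Complex.I))
        * (Real.exp (-η * |ξ|) : ℂ) * Complex.exp ((ξ : ℂ) * x * Complex.I)
      = ∫ y : ℝ, f y * ((2 * η / (η ^ 2 + (x - y) ^ 2) : ℝ) : ℂ) := by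
  have hE : Integrable (fun ξ : ℝ => (Real.exp (-η * |ξ|) : ℂ)) := by
    have := aux_int η hη 0
    simpa [integrableOn_univ] using (this.1.union this.2)
  have hP : Integrable (Function.uncurry fun (ξ y : ℝ) =>
      f y * ((Real.exp (-η * |ξ|) : ℂ) * Complex.exp ((ξ : ℂ) * ((x - y : ℝ) : ℂ) * Complex.I)))
      (volume.prod volume) := by
    have h0 := hE.mul_prod hfi
    have hc : Continuous (fun p : ℝ × ℝ =>
      Complex.exp ((p.1 : ℂ) * ((x - p.2 : ℝ) : ℂ) * Complex.I)) := by fun_prop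
    refine (h0.mul_bdd (c := 1) hc.aestronglyMeasurable (ae_of_all _ fun p => ?_)).congr
      (ae_of_all _ fun p => ?_)
    · rw [← Complex.ofReal_mul, Complex.norm_exp_ofReal_mul_I]
    · simp only [Function.uncurry]; ring
  calc _ = ∫ ξ : ℝ, ∫ y : ℝ, f y * ((Real.exp (-η * |ξ|) : ℂ)
        * Complex.exp ((ξ : ℂ) * ((x - y : ℝ) : ℂ) * Complex.I)) := by
        congr 1; ext ξ
        rw [mul_assoc, ← integral_mul_const]
        congr 1; ext y
        have : Complex.exp ((ξ : ℂ) * ((x - y : ℝ) : ℂ) * Complex.I) =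
          Complex.exp (-(ξ : ℂ) * y * Complex.I) * Complex.exp ((ξ : ℂ) * x * Complex.I) := by
          rw [← Complex.exp_add]; congr 1; push_cast; ring
        rw [this]; ring
    _ = _ := by
        rw [integral_integral_swap hP]
        congr 1; ext y
        rw [integral_const_mul, aux_kernel η hη]

theorem abel_means_fourier_inversion (f : ℝ → ℂ)
    (hfc : Continuous f) (hfi : Integrable f)
    (fhat : ℝ → ℂ)
    (hfhat : ∀ ξ : ℝ, fhat ξ = ∫ x : ℝ, f x * Complex.exp (-(ξ : ℂ) * x * Complex.I)) :
    ∀ x : ℝ, Tendsto (fun η : ℝ =>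
      (1 / (2 * Real.pi)) * ∫ ξ : ℝ,
        fhat ξ * (Real.exp (-η * |ξ|) : ℂ) * Complex.exp ((ξ : ℂ) * x * Complex.I))
      (nhdsWithin 0 (Set.Ioi 0)) (nhds (f x)) := by
  intro x
  have key := tendsto_integral_comp_smul_smul_of_integrable' (μ := (volume : Measure ℝ))
    (φ := fun t : ℝ => Real.pi⁻¹ * (1 + t ^ 2)⁻¹) (fun t => by positivity)
    (by rw [integral_const_mul, integral_univ_inv_one_add_sq]
        exact inv_mul_cancel₀ Real.pi_ne_zero)
    (by
      have h1 : Tendsto (fun t : ℝ => Real.pi⁻¹ * ‖t‖⁻¹) (Bornology.cobounded ℝ) (nhds 0) := by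
        simpa using (tendsto_inv_atTop_zero.comp
          (tendsto_norm_cobounded_atTop (E := ℝ))).const_mul Real.pi⁻¹
      refine squeeze_zero (fun t => by positivity) (fun t => ?_) h1
      simp only [Module.finrank_self, pow_one]
      rw [mul_left_comm]
      refine mul_le_mul_of_nonneg_left ?_ (by positivity)
      rcases eq_or_ne t 0 with rfl | ht
      · simp
      · have : 0 < ‖t‖ := norm_pos_iff.2 ht
        rw [← div_eq_mul_inv, inv_eq_one_div, div_le_div_iff₀ (by positivity) this,
          Real.norm_eq_abs, abs_mul_abs_self]
        nlinarith)
    hfi (hfc.continuousAt (x := x))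
  refine (key.comp tendsto_inv_nhdsGT_zero).congr' ?_
  filter_upwards [self_mem_nhdsWithin] with η hη
  have hη : 0 < η := hη
  simp only [hfhat, Function.comp]
  rw [aux_fubini f hfi x η hη, ← integral_const_mul]
  congr 1; ext y
  have e : (η⁻¹ ^ (Module.finrank ℝ ℝ) * (Real.pi⁻¹ * (1 + (η⁻¹ • (x - y)) ^ 2)⁻¹) : ℝ)
      = (1 / (2 * Real.pi)) * (2 * η / (η ^ 2 + (x - y) ^ 2)) := by
    simp only [Module.finrank_self, pow_one, smul_eq_mul]
    have := Real.pi_ne_zero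
    have h3 : (η ^ 2 + (x - y) ^ 2 : ℝ) ≠ 0 := by positivity
    have h4 : (1 + (η⁻¹ * (x - y)) ^ 2 : ℝ) = (η ^ 2 + (x - y) ^ 2) / η ^ 2 := by
      field_simp
    rw [h4]
    field_simp
  rw [e, Complex.real_smul]
  push_cast
  ring
end

section
/- Let f : ℝ → ℂ be a bounded continuous almost periodic function which vanishes at infinity, i.e., for every ε > 0 there is R ≥ 0 such that |f(x)| < ε whenever |x| ≥ R. Then f(x) = 0 for every x ∈ ℝ. -/
/-- A function `f : ℝ → ℂ` is almost periodic if for every `ε > 0` there are finitely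
many `y₁, …, yₙ ∈ ℝ` such that every translate of `f` is uniformly within `ε` of one of
the translates by the `yⱼ`. -/
def AlmostPeriodic (f : ℝ → ℂ) : Prop :=
  ∀ ε : ℝ, 0 < ε → ∃ Y : Finset ℝ, Y.Nonempty ∧
    ∀ y : ℝ, ∃ yj ∈ Y, ∀ x : ℝ, ‖f (x - y) - f (x - yj)‖ < ε

theorem almost_periodic_vanishing_at_infinity_is_zero (f : ℝ → ℂ)
    (hfc : Continuous f) (hfb : ∃ A : ℝ, ∀ x : ℝ, ‖f x‖ ≤ A)
    (hfap : AlmostPeriodic f)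
    (hvanish : ∀ ε : ℝ, 0 < ε → ∃ R : ℝ, 0 ≤ R ∧ ∀ x : ℝ, R ≤ |x| → ‖f x‖ < ε) :
    ∀ x : ℝ, f x = 0 := by
  intro x0
  by_contra h
  have hpos : 0 < ‖f x0‖ := norm_pos_iff.mpr h
  obtain ⟨Y, -, hY⟩ := hfap (‖f x0‖ / 2) (by linarith)
  obtain ⟨R, hR, hf⟩ := hvanish (‖f x0‖ / 2) (by linarith)
  obtain ⟨yj, hj, hx⟩ := hY (|x0| + (∑ t ∈ Y, |t|) + R)
  have hM : |yj| ≤ ∑ t ∈ Y, |t| :=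
    Finset.single_le_sum (f := fun t : ℝ => |t|) (fun t _ => abs_nonneg t) hj
  have h1 := hx (x0 + yj)
  have h2 := hf (x0 + yj - (|x0| + (∑ t ∈ Y, |t|) + R)) (by
    rw [le_abs]
    right
    linarith [le_abs_self x0, le_abs_self yj])
  rw [add_sub_cancel_right, norm_sub_rev] at h1
  have h3 := norm_sub_norm_le (f x0) (f (x0 + yj - (|x0| + (∑ t ∈ Y, |t|) + R)))
  linarith
end

section
/- Let f : ℝ → ℂ be a bounded continuous almost periodic function. Then there exists a unique complex number μ(f) such that for every η > 0 there is L > 0 with the property that for all real numbers a < b with b − a ≥ L, |μ(f) − (1/(b − a)) ∫_a^b f(x) dx| < η. Moreover |μ(f)| ≤ sup_{x∈ℝ} |f(x)|, and if f is real-valued and nonnegative then μ(f) ≥ 0. -/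
open MeasureTheory intervalIntegral

/-- Translates of long integrals are close. -/
lemma ap_shift (f : ℝ → ℂ) (hfc : Continuous f) (A : ℝ) (hA : ∀ x : ℝ, ‖f x‖ ≤ A)
    (hfap : AlmostPeriodic f) (ε : ℝ) (hε : 0 < ε) :
    ∃ C : ℝ, 0 ≤ C ∧ ∀ a T : ℝ, 0 ≤ T →
      ‖(∫ x in (0:ℝ)..T, f (a + x)) - ∫ x in (0:ℝ)..T, f x‖ ≤ ε * T + C := by
  obtain ⟨Y, -, hY⟩ := hfap ε hε
  have hA0 : 0 ≤ A := (norm_nonneg _).trans (hA 0)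
  refine ⟨∑ y ∈ Y, 2 * A * |y|, Finset.sum_nonneg fun y _ => by positivity, ?_⟩
  intro a T hT
  obtain ⟨y, hy, h⟩ := hY (-a)
  have i : ∀ (g : ℝ → ℂ), Continuous g → ∀ a b : ℝ, IntervalIntegrable g volume a b :=
    fun g hg a b => hg.intervalIntegrable a b
  have h1 : ‖(∫ x in (0:ℝ)..T, f (a + x)) - ∫ x in (0:ℝ)..T, f (x - y)‖ ≤ ε * T := by
    rw [← integral_sub (i _ (by fun_prop) _ _) (i _ (by fun_prop) _ _)]
    have := norm_integral_le_of_norm_le_const (a := 0) (b := T) (C := ε)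
      (f := fun x => f (a + x) - f (x - y)) (fun x _ => by
        have := (h x).le
        rwa [sub_neg_eq_add, add_comm x a] at this)
    rwa [sub_zero, abs_of_nonneg hT] at this
  have h2 : ‖(∫ x in (0:ℝ)..T, f (x - y)) - ∫ x in (0:ℝ)..T, f x‖ ≤ 2 * A * |y| := by
    rw [integral_comp_sub_right (fun x => f x) y,
      integral_interval_sub_interval_comm (i f hfc _ _) (i f hfc _ _) (i f hfc _ _)]
    have e1 := norm_integral_le_of_norm_le_const (a := 0 - y) (b := 0) (C := A)
      (f := f) (fun x _ => hA x)
    have e2 := norm_integral_le_of_norm_le_const (a := T - y) (b := T) (C := A)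
      (f := f) (fun x _ => hA x)
    have q1 : (0:ℝ) - (0 - y) = y := by ring
    have q2 : T - (T - y) = y := by ring
    rw [q1] at e1
    rw [q2] at e2
    refine (norm_sub_le _ _).trans ?_
    linarith
  have h3 : 2 * A * |y| ≤ ∑ y ∈ Y, 2 * A * |y| :=
    Finset.single_le_sum (f := fun y => 2 * A * |y|) (fun y _ => by positivity) hy
  have := norm_sub_le_norm_sub_add_norm_sub (∫ x in (0:ℝ)..T, f (a + x))
    (∫ x in (0:ℝ)..T, f (x - y)) (∫ x in (0:ℝ)..T, f x)
  linarith

lemma ap_double (f : ℝ → ℂ) (hfc : Continuous f) (ε C : ℝ)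
    (h : ∀ a T : ℝ, 0 ≤ T →
      ‖(∫ x in (0:ℝ)..T, f (a + x)) - ∫ x in (0:ℝ)..T, f x‖ ≤ ε * T + C)
    (S T : ℝ) (hS : 0 < S) (hT : 0 < T) :
    ‖(∫ s in (0:ℝ)..S, ∫ x in (0:ℝ)..T, f (s + x)) - (S : ℂ) * ∫ x in (0:ℝ)..T, f x‖
      ≤ (ε * T + C) * S := by
  have hc : Continuous fun s : ℝ => ∫ x in (0:ℝ)..T, f (s + x) :=
    continuous_parametric_intervalIntegral_of_continuous' (by fun_prop) 0 T
  have e : (S : ℂ) * (∫ x in (0:ℝ)..T, f x) = ∫ s in (0:ℝ)..S, ∫ x in (0:ℝ)..T, f x := by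
    rw [intervalIntegral.integral_const, sub_zero, Complex.real_smul]
  rw [e, ← integral_sub (hc.intervalIntegrable _ _) (continuous_const.intervalIntegrable _ _)]
  have := norm_integral_le_of_norm_le_const (a := 0) (b := S) (C := ε * T + C)
      (f := fun s => (∫ x in (0:ℝ)..T, f (s + x)) - ∫ x in (0:ℝ)..T, f x)
      (fun x _ => h x T hT.le)
  rwa [sub_zero, abs_of_pos hS] at this

lemma ap_cauchy (f : ℝ → ℂ) (hfc : Continuous f) (ε C : ℝ)
    (h : ∀ a T : ℝ, 0 ≤ T →
      ‖(∫ x in (0:ℝ)..T, f (a + x)) - ∫ x in (0:ℝ)..T, f x‖ ≤ ε * T + C)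
    (S T : ℝ) (hS : 0 < S) (hT : 0 < T) :
    ‖((1 / T : ℝ) : ℂ) * (∫ x in (0:ℝ)..T, f x) - ((1 / S : ℝ) : ℂ) * ∫ x in (0:ℝ)..S, f x‖
      ≤ 2 * ε + C / T + C / S := by
  have h1 := ap_double f hfc ε C h S T hS hT
  have h2 := ap_double f hfc ε C h T S hT hS
  have sw : (∫ s in (0:ℝ)..S, ∫ x in (0:ℝ)..T, f (s + x)) =
      ∫ s in (0:ℝ)..T, ∫ x in (0:ℝ)..S, f (s + x) := by
    have hc : Continuous (Function.uncurry fun s x : ℝ => f (s + x)) := by fun_prop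
    simp_rw [intervalIntegral.integral_of_le hS.le, intervalIntegral.integral_of_le hT.le]
    rw [integral_integral_swap]
    · simp_rw [add_comm]
    · rw [Measure.prod_restrict]
      exact (hc.continuousOn.integrableOn_compact (isCompact_Icc.prod isCompact_Icc)).mono_set
        (Set.prod_mono Set.Ioc_subset_Icc_self Set.Ioc_subset_Icc_self)
  rw [sw] at h1
  set D := ∫ s in (0:ℝ)..T, ∫ x in (0:ℝ)..S, f (s + x)
  set P := ∫ x in (0:ℝ)..T, f x
  set Q := ∫ x in (0:ℝ)..S, f x
  have hS' : (S : ℂ) ≠ 0 := by exact_mod_cast hS.ne'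
  have hT' : (T : ℂ) ≠ 0 := by exact_mod_cast hT.ne'
  have e : ((1 / T : ℝ) : ℂ) * P - ((1 / S : ℝ) : ℂ) * Q
      = ((1 / (S * T) : ℝ) : ℂ) * ((D - T * Q) - (D - S * P)) := by
    push_cast
    field_simp
    ring
  rw [e, norm_mul, Complex.norm_real, Real.norm_of_nonneg (by positivity)]
  have h3 := norm_sub_le (D - T * Q) (D - S * P)
  have e2 : 2 * ε + C / T + C / S = 1 / (S * T) * ((ε * S + C) * T + (ε * T + C) * S) := by
    field_simp
    ring
  rw [e2]
  exact mul_le_mul_of_nonneg_left (by linarith) (by positivity)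

theorem invariant_mean_exists_unique (f : ℝ → ℂ)
    (hfc : Continuous f) (hfb : ∃ A : ℝ, ∀ x : ℝ, ‖f x‖ ≤ A)
    (hfap : AlmostPeriodic f) :
    ∃ μf : ℂ,
      (∀ η : ℝ, 0 < η → ∃ L : ℝ, 0 < L ∧ ∀ a b : ℝ, a < b → L ≤ b - a →
        ‖μf - (1 / (b - a) : ℝ) * ∫ x in a..b, f x‖ < η) ∧
      (∀ μ' : ℂ,
        (∀ η : ℝ, 0 < η → ∃ L : ℝ, 0 < L ∧ ∀ a b : ℝ, a < b → L ≤ b - a →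
          ‖μ' - (1 / (b - a) : ℝ) * ∫ x in a..b, f x‖ < η) → μ' = μf) ∧
      ‖μf‖ ≤ ⨆ x : ℝ, ‖f x‖ ∧
      ((∀ x : ℝ, (f x).im = 0 ∧ 0 ≤ (f x).re) → μf.im = 0 ∧ 0 ≤ μf.re) := by
  obtain ⟨A, hA⟩ := hfb
  set G : ℝ → ℂ := fun T => ((1 / T : ℝ) : ℂ) * ∫ x in (0:ℝ)..T, f x with hG
  -- uniform version
  have key : ∀ η : ℝ, 0 < η → ∃ L : ℝ, 0 < L ∧ ∀ S T : ℝ, L ≤ S → L ≤ T → ∀ a : ℝ,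
      ‖G S - ((1 / T : ℝ) : ℂ) * ∫ x in (0:ℝ)..T, f (a + x)‖ ≤ η := by
    intro η hη
    obtain ⟨C, hC, h⟩ := ap_shift f hfc A hA hfap (η / 6) (by positivity)
    refine ⟨6 * C / η + 1, by positivity, fun S T hS hT a => ?_⟩
    have hL : 0 < 6 * C / η + 1 := by positivity
    have hS0 := hL.trans_le hS
    have hT0 := hL.trans_le hT
    have b : ∀ T : ℝ, 6 * C / η + 1 ≤ T → C / T ≤ η / 6 := by
      intro T hT
      have : 0 < T := hL.trans_le hT
      rw [div_le_iff₀ this]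
      have : 6 * C / η ≤ T := by linarith
      rw [div_le_iff₀ hη] at this
      linarith
    have h1 := ap_cauchy f hfc _ C h T S hT0 hS0
    have h2 : ‖G T - ((1 / T : ℝ) : ℂ) * ∫ x in (0:ℝ)..T, f (a + x)‖ ≤ η / 6 + C / T := by
      rw [hG, ← mul_sub, norm_mul, Complex.norm_real, Real.norm_of_nonneg (by positivity),
        norm_sub_rev]
      have := mul_le_mul_of_nonneg_left (h a T hT0.le) (by positivity : 0 ≤ 1 / T)
      refine this.trans (le_of_eq ?_)
      field_simp
    have h3 := norm_sub_le_norm_sub_add_norm_sub (G S) (G T)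
      (((1 / T : ℝ) : ℂ) * ∫ x in (0:ℝ)..T, f (a + x))
    have := b S hS
    have := b T hT
    change ‖G S - G T‖ ≤ _ at h1
    linarith
  have hcau : CauchySeq G := by
    rw [Metric.cauchySeq_iff]
    intro η hη
    obtain ⟨L, hL, h⟩ := key (η / 2) (by positivity)
    refine ⟨L, fun m hm n hn => ?_⟩
    have := h m n hm hn 0
    simp only [zero_add] at this
    rw [dist_eq_norm]
    exact this.trans_lt (by linarith)
  obtain ⟨μ, hμ⟩ := cauchySeq_tendsto_of_complete hcau
  have main : ∀ η : ℝ, 0 < η → ∃ L : ℝ, 0 < L ∧ ∀ a b : ℝ, a < b → L ≤ b - a →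
        ‖μ - (1 / (b - a) : ℝ) * ∫ x in a..b, f x‖ < η := by
    intro η hη
    obtain ⟨L, hL, h⟩ := key (η / 2) (by positivity)
    refine ⟨L, hL, fun a b hab hLab => ?_⟩
    have e : ∫ x in a..b, f x = ∫ x in (0:ℝ)..(b - a), f (a + x) := by
      rw [integral_comp_add_left (fun x => f x) a]
      simp
    rw [e]
    have : ‖μ - ((1 / (b - a) : ℝ) : ℂ) * ∫ x in (0:ℝ)..(b - a), f (a + x)‖ ≤ η / 2 := by
      refine le_of_tendsto (hμ.sub_const _).norm ?_
      filter_upwards [Filter.eventually_ge_atTop L] with S hS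
      exact h S (b - a) hS hLab a
    linarith
  refine ⟨μ, main, ?_, ?_, ?_⟩
  · intro μ' h'
    refine eq_of_forall_dist_le fun η hη => ?_
    obtain ⟨L, hL, h⟩ := main (η / 2) (by positivity)
    obtain ⟨L', hL', h'⟩ := h' (η / 2) (by positivity)
    have hm : 0 < max L L' := lt_max_of_lt_left hL
    have h1 := h 0 (max L L') hm (by simp)
    have h2 := h' 0 (max L L') hm (by simp)
    rw [norm_sub_rev] at h1
    rw [dist_eq_norm]
    have := norm_sub_le_norm_sub_add_norm_sub μ'
      (((1 / (max L L' - 0) : ℝ) : ℂ) * ∫ x in (0:ℝ)..(max L L'), f x) μ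
    linarith
  · refine le_of_tendsto hμ.norm ?_
    filter_upwards [Filter.eventually_gt_atTop 0] with T hT
    have := norm_integral_le_of_norm_le_const (a := 0) (b := T) (C := ⨆ x : ℝ, ‖f x‖)
      (f := f) (fun x _ => le_ciSup (f := fun x => ‖f x‖)
        ⟨A, by rintro _ ⟨x, rfl⟩; exact hA x⟩ x)
    rw [sub_zero, abs_of_pos hT] at this
    rw [hG, norm_mul, Complex.norm_real, Real.norm_of_nonneg (by positivity), one_div,
      inv_mul_le_iff₀ hT]
    linarith
  · intro hp
    have e : f = fun x => ((f x).re : ℂ) := by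
      funext x
      exact Complex.ext (by simp) (by simp [(hp x).1])
    have hGr : ∀ T, G T = ((1 / T * ∫ x in (0:ℝ)..T, (f x).re : ℝ) : ℂ) := by
      intro T
      rw [Complex.ofReal_mul, ← intervalIntegral.integral_ofReal, ← e]
    constructor
    · refine tendsto_nhds_unique ((Complex.continuous_im.tendsto μ).comp hμ) ?_
      refine tendsto_const_nhds.congr fun T => ?_
      rw [Function.comp, hGr, Complex.ofReal_im]
    · refine ge_of_tendsto ((Complex.continuous_re.tendsto μ).comp hμ) ?_
      filter_upwards [Filter.eventually_gt_atTop 0] with T hT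
      rw [Function.comp, hGr, Complex.ofReal_re]
      have := intervalIntegral.integral_nonneg (μ := volume) hT.le (fun x _ => (hp x).2)
      positivity
end

section
/- Let f : ℝ → ℂ be a bounded continuous almost periodic function, and suppose f(x₀) ≠ 0 for some x₀ ∈ ℝ. Then there exist c > 0 and L > 0 such that for all real numbers a < b with b − a ≥ L, (1/(b − a)) ∫_a^b |f(x)| dx ≥ c. -/
open MeasureTheory intervalIntegral

theorem almost_periodic_nonzero_mean_of_abs (f : ℝ → ℂ)
    (hfc : Continuous f) (hfb : ∃ A : ℝ, ∀ x : ℝ, ‖f x‖ ≤ A)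
    (hfap : AlmostPeriodic f)
    (x₀ : ℝ) (hx₀ : f x₀ ≠ 0) :
    ∃ c : ℝ, 0 < c ∧ ∃ L : ℝ, 0 < L ∧ ∀ a b : ℝ, a < b → L ≤ b - a →
      c ≤ (1 / (b - a)) * ∫ x in a..b, ‖f x‖ := by
  obtain ⟨δ, hδ, hδf⟩ : ∃ δ > 0, ∀ u, |u - x₀| ≤ δ → ‖f x₀‖ / 2 ≤ ‖f u‖ := by
    have h0 : 0 < ‖f x₀‖ := norm_pos_iff.mpr hx₀
    obtain ⟨d, hd, h⟩ := Metric.continuous_iff.mp hfc x₀ (‖f x₀‖ / 2) (by positivity)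
    refine ⟨d / 2, by positivity, fun u hu => ?_⟩
    have h1 := h u (by rw [Real.dist_eq]; linarith)
    rw [dist_eq_norm, norm_sub_rev] at h1
    have := norm_sub_norm_le (f x₀) (f u)
    linarith
  set η := ‖f x₀‖ / 4 with hη
  have hηp : 0 < η := by have : 0 < ‖f x₀‖ := norm_pos_iff.mpr hx₀
                         positivity
  obtain ⟨Y, -, hY⟩ := hfap η hηp
  obtain ⟨R, hR0, hR⟩ : ∃ R : ℝ, 0 ≤ R ∧ ∀ y ∈ Y, |y| ≤ R :=
    ⟨∑ y ∈ Y, |y|, Finset.sum_nonneg fun _ _ => abs_nonneg _, fun y hy =>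
      Finset.single_le_sum (f := fun y : ℝ => |y|) (fun _ _ => abs_nonneg _) hy⟩
  have hii : ∀ a b : ℝ, IntervalIntegrable (fun x => ‖f x‖) volume a b :=
    fun a b => hfc.norm.intervalIntegrable a b
  have mono : ∀ a b c d : ℝ, a ≤ c → c ≤ d → d ≤ b →
      ∫ x in c..d, ‖f x‖ ≤ ∫ x in a..b, ‖f x‖ := fun a b c d h1 h2 h3 =>
    intervalIntegral.integral_mono_interval h1 h2 h3
      (Filter.Eventually.of_forall fun _ => norm_nonneg _) (hii a b)
  set l := 2 * (R + δ) with hl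
  have hlp : 0 < l := by positivity
  have key : ∀ a : ℝ, 2 * δ * η ≤ ∫ x in a..(a + l), ‖f x‖ := by
    intro a
    obtain ⟨yj, hyj, h⟩ := hY (x₀ - (a + (R + δ)))
    have hb := abs_le.mp (hR yj hyj)
    set m := a + (R + δ) + yj with hm
    refine le_trans ?_ (mono a (a + l) (m - δ) (m + δ) (by linarith) (by linarith) (by linarith))
    have h2 : ∫ x in (m - δ)..(m + δ), η ≤ ∫ x in (m - δ)..(m + δ), ‖f x‖ := by
      refine intervalIntegral.integral_mono_on (by linarith) (by simp) (hii _ _) ?_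
      intro x hx
      have h3 := h (x - m + x₀ + yj)
      rw [show x - m + x₀ + yj - (x₀ - (a + (R + δ))) = x by rw [hm]; ring,
        show x - m + x₀ + yj - yj = x - m + x₀ by ring, norm_sub_rev] at h3
      have h4 := hδf (x - m + x₀) (by
        rw [abs_le]; constructor <;> linarith [hx.1, hx.2])
      have := norm_sub_norm_le (f (x - m + x₀)) (f x)
      linarith
    rw [intervalIntegral.integral_const, smul_eq_mul] at h2
    linarith
  have ind : ∀ (n : ℕ) (a : ℝ), n * (2 * δ * η) ≤ ∫ x in a..(a + n * l), ‖f x‖ := by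
    intro n a
    induction n with
    | zero => simp
    | succ n ih =>
      have h1 := key (a + n * l)
      rw [← intervalIntegral.integral_add_adjacent_intervals (hii a (a + n * l)) (hii _ _)]
      push_cast
      rw [show a + (n + 1) * l = a + n * l + l by ring]
      linarith
  refine ⟨δ * η / l, by positivity, l, hlp, fun a b hab hL => ?_⟩
  have hba : 0 < b - a := by linarith
  set n := ⌊(b - a) / l⌋₊ with hn
  have h1 : (n : ℝ) * l ≤ b - a := by
    have := Nat.floor_le (a := (b - a) / l) (by positivity)
    rwa [le_div_iff₀ hlp] at this
  have h2 : b - a < (n + 1) * l := by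
    have := Nat.lt_floor_add_one ((b - a) / l)
    rwa [div_lt_iff₀ hlp] at this
  have h3 : (1 : ℝ) ≤ n := by
    have : 1 ≤ n := Nat.le_floor (by rw [Nat.cast_one, le_div_iff₀ hlp]; linarith)
    exact_mod_cast this
  have h4 := ind n a
  have h5 := mono a b a (a + n * l) le_rfl (by nlinarith) (by linarith)
  have h6 : b - a ≤ 2 * n * l := by nlinarith
  rw [one_div, inv_mul_eq_div, div_le_div_iff₀ hlp hba]
  have h7 : δ * η * (b - a) ≤ δ * η * (2 * n * l) := by gcongr
  have h8 : n * (2 * δ * η) * l ≤ (∫ x in a..b, ‖f x‖) * l := by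
    gcongr
    linarith
  linarith
end
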